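/- For every integer n ≥ 6, one has 24(3n^2 − 3n + 1)/(5n^2) < P_n/P_{n−1} < 16(n^3 − n^2 − 1)/n^3. -/

import Mathlib

/-!
Write `r n = P n / P (n - 1)`. The recurrence reads
`r (n + 1) = (8 (3 n ^ 2 + 3 n + 1) - 128 n ^ 2 / r n) / (n + 1) ^ 2`, which is increasing in `r n`,
so each bound propagates separately by induction, starting from the explicit values
`P 5 = 137728` and `P 6 = 1823744`. The lower bound propagates because
`200 n ^ 4 ≤ 24 ((3 n ^ 2 + 1) ^ 2 - 9 n ^ 2)`, and the upper one because
`(n ^ 3 + 2 n ^ 2 + 2 n + 3) (n ^ 3 - n ^ 2 - 1) = n ^ 6 + n ^ 5 - (5 n ^ 2 + 2 n + 3)`.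
The argument is carried out with the denominators cleared (`lower_step`, `upper_step`), keeping
positivity of the sequence in the induction hypothesis.
-/

/-- Propagation of the lower bound, for consecutive terms `p, q, s` with indices
`x - 1, x, x + 1`. -/
lemma lower_step {x p q s : ℝ} (hx : 6 ≤ x) (hp : 0 < p)
    (hl : 24 * (3 * x ^ 2 - 3 * x + 1) * p < 5 * x ^ 2 * q)
    (hs : (x + 1) ^ 2 * s = 8 * (3 * x ^ 2 + 3 * x + 1) * q - 128 * x ^ 2 * p) :
    24 * (3 * x ^ 2 + 3 * x + 1) * q < 5 * (x + 1) ^ 2 * s := by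
  have hb : 0 < 3 * x ^ 2 + 3 * x + 1 := by positivity
  have h1 := mul_lt_mul_of_pos_left hl hb
  have h2 : 0 ≤ (16 * x ^ 4 - 72 * x ^ 2 + 24) * p :=
    mul_nonneg (by nlinarith [sq_nonneg (x ^ 2 - 5)]) hp.le
  have h3 : x ^ 2 * (40 * x ^ 2 * p) < x ^ 2 * ((3 * x ^ 2 + 3 * x + 1) * q) := by
    linarith
  have h4 := lt_of_mul_lt_mul_left h3 (by positivity)
  linarith

/-- Propagation of the upper bound, for consecutive terms `p, q, s` with indices
`x - 1, x, x + 1`. -/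
lemma upper_step {x p q s : ℝ} (hx : 6 ≤ x) (hq : 0 < q)
    (hu : x ^ 3 * q < 16 * (x ^ 3 - x ^ 2 - 1) * p)
    (hs : (x + 1) ^ 2 * s = 8 * (3 * x ^ 2 + 3 * x + 1) * q - 128 * x ^ 2 * p) :
    (x + 1) ^ 3 * s < 16 * ((x + 1) ^ 3 - (x + 1) ^ 2 - 1) * q := by
  have hc : 0 < x ^ 3 - x ^ 2 - 1 := by nlinarith [sq_nonneg x]
  have h1 := mul_lt_mul_of_pos_left hu (show 0 < (x + 1) * x ^ 2 by positivity)
  have h2 : 0 < (5 * x ^ 2 + 2 * x + 3) * q := by positivity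
  have h3 : (x ^ 3 - x ^ 2 - 1) * ((x ^ 3 + 2 * x ^ 2 + 2 * x + 3) * q)
      < (x ^ 3 - x ^ 2 - 1) * (16 * (x + 1) * x ^ 2 * p) := by
    linarith
  have h4 := lt_of_mul_lt_mul_left h3 hc.le
  have h5 : (x + 1) ^ 3 * s
      = (x + 1) * (8 * (3 * x ^ 2 + 3 * x + 1) * q - 128 * x ^ 2 * p) := by
    rw [← hs]; ring
  rw [h5]
  linarith

/-- Bounds for the ratio `P_n / P_{n-1}` of the Catalan-Larcombe-French
sequence, for `n ≥ 6`. -/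
theorem stmt_7 (P : ℕ → ℝ) (hP0 : P 0 = 1) (hP1 : P 1 = 8)
    (hrec : ∀ n : ℕ, 2 ≤ n →
      (n : ℝ) ^ 2 * P n =
        8 * (3 * (n : ℝ) ^ 2 - 3 * (n : ℝ) + 1) * P (n - 1)
          - 128 * ((n : ℝ) - 1) ^ 2 * P (n - 2)) :
    ∀ n : ℕ, 6 ≤ n →
      24 * (3 * (n : ℝ) ^ 2 - 3 * (n : ℝ) + 1) / (5 * (n : ℝ) ^ 2) < P n / P (n - 1) ∧
        P n / P (n - 1) < 16 * ((n : ℝ) ^ 3 - (n : ℝ) ^ 2 - 1) / (n : ℝ) ^ 3 := by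
  have key : ∀ n : ℕ, 6 ≤ n → 0 < P (n - 1) ∧ 0 < P n ∧
      24 * (3 * (n : ℝ) ^ 2 - 3 * (n : ℝ) + 1) * P (n - 1) < 5 * (n : ℝ) ^ 2 * P n ∧
      (n : ℝ) ^ 3 * P n < 16 * ((n : ℝ) ^ 3 - (n : ℝ) ^ 2 - 1) * P (n - 1) := by
    intro n hn
    induction n, hn using Nat.le_induction with
    | base =>
      have h2 := hrec 2 (by norm_num)
      have h3 := hrec 3 (by norm_num)
      have h4 := hrec 4 (by norm_num)
      have h5 := hrec 5 (by norm_num)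
      have h6 := hrec 6 (by norm_num)
      norm_num [hP0, hP1] at h2 h3 h4 h5 h6 ⊢
      have e2 : P 2 = 80 := by linarith
      have e3 : P 3 = 896 := by linarith
      have e4 : P 4 = 10816 := by linarith
      have e5 : P 5 = 137728 := by linarith
      have e6 : P 6 = 1823744 := by linarith
      rw [e5, e6]
      norm_num
    | succ n hn ih =>
      obtain ⟨hp, hq, hl, hu⟩ := ih
      have hx : (6 : ℝ) ≤ n := by exact_mod_cast hn
      have hs : ((n : ℝ) + 1) ^ 2 * P (n + 1)
          = 8 * (3 * (n : ℝ) ^ 2 + 3 * n + 1) * P n - 128 * (n : ℝ) ^ 2 * P (n - 1) := by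
        have h := hrec (n + 1) (by omega)
        rw [show n + 1 - 1 = n by omega, show n + 1 - 2 = n - 1 by omega] at h
        push_cast at h
        rw [h]; ring
      have hl' := lower_step hx hp hl hs
      have hu' := upper_step hx hq hu hs
      have hpos : 0 < P (n + 1) := by
        have h0 : 0 < 24 * (3 * (n : ℝ) ^ 2 + 3 * n + 1) * P n := by positivity
        exact pos_of_mul_pos_right (h0.trans hl') (by positivity)
      rw [show n + 1 - 1 = n by omega]
      push_cast
      refine ⟨hq, hpos, ?_, hu'⟩
      linarith
  intro n hn
  obtain ⟨hp, -, hl, hu⟩ := key n hn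
  have hx : (0 : ℝ) < n := by exact_mod_cast (by omega : 0 < n)
  constructor
  · rw [div_lt_div_iff₀ (by positivity) hp]
    linarith
  · rw [div_lt_div_iff₀ hp (by positivity)]
    linarith
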